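/- In Z, for all X, Y ⊆ S ∖ I and all distinct x, y ∈ I: if X;Y contains some element u with dom u = x and rg u = y, then X;Y contains every element v ∈ S with dom v = x and rg v = y. In particular, the composition of two sets of diversity atoms splits no pair of distinct identity atoms. -/

import Mathlib

open FirstOrder FirstOrder.Language

/-- Relation symbols of the language of atom structures: a unary `I`,
a binary `C` and a ternary `P`. -/
inductive AtomRel : ℕ → Type
  | I : AtomRel 1
  | C : AtomRel 2
  | P : AtomRel 3

/-- The first-order language with one ternary relation symbol `P`, one binary
relation symbol `C` and one unary relation symbol `I`. -/
def atomLang : FirstOrder.Language :=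
  ⟨fun _ => Empty, AtomRel⟩

/-- Function symbols of the language of the term algebras: a constant `1'`,
unary symbols `−` (complement) and `⁻` (converse), binary symbols `+` and `;`. -/
inductive AlgFun : ℕ → Type
  | one : AlgFun 0
  | compl : AlgFun 1
  | conv : AlgFun 1
  | add : AlgFun 2
  | comp : AlgFun 2

/-- The first-order language with binary operations `+` and `;`, unary
operations `−` and `⁻`, and a constant `1'`. -/
def algLang : FirstOrder.Language :=
  ⟨AlgFun, fun _ => Empty⟩

section Generic

variable {M : Type} [atomLang.Structure M]

/-- The interpretation of the unary relation symbol `I`. -/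
def mI (a : M) : Prop := Structure.RelMap (L := atomLang) (AtomRel.I : atomLang.Relations 1) ![a]

/-- The interpretation of the binary relation symbol `C`. -/
def mC (a b : M) : Prop := Structure.RelMap (L := atomLang) (AtomRel.C : atomLang.Relations 2) ![a, b]

/-- The interpretation of the ternary relation symbol `P`. -/
def mP (a b c : M) : Prop := Structure.RelMap (L := atomLang) (AtomRel.P : atomLang.Relations 3) ![a, b, c]

/-- `X ; Y = {u : ∃ x ∈ X, y ∈ Y, P(x,y,u)}`. -/
def sComp (X Y : Set M) : Set M := {u | ∃ x ∈ X, ∃ y ∈ Y, mP x y u}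

/-- `X⁻ = {u : ∃ x ∈ X, C(x,u)}`. -/
def sConv (X : Set M) : Set M := {u | ∃ x ∈ X, mC x u}

/-- The set of elements satisfying `I`. -/
def idSet (M : Type) [atomLang.Structure M] : Set M := {a | mI a}

end Generic

/-- Membership in the term algebra: the smallest collection of subsets of `M`
containing all singletons and the set `I`, closed under binary union,
complementation, `;` and `⁻`. -/
inductive InTA (M : Type) [atomLang.Structure M] : Set M → Prop
  | sing (a : M) : InTA M {a}
  | idset : InTA M (idSet M)
  | union {X Y : Set M} : InTA M X → InTA M Y → InTA M (X ∪ Y)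
  | compl {X : Set M} : InTA M X → InTA M Xᶜ
  | comp {X Y : Set M} : InTA M X → InTA M Y → InTA M (sComp X Y)
  | conv {X : Set M} : InTA M X → InTA M (sConv X)

/-- The term algebra of an atom structure, as a type. -/
def TermAlg (M : Type) [atomLang.Structure M] : Type := {X : Set M // InTA M X}

/-- The term algebra as a structure in the language `algLang`:
`+` is union, `−` is complement, `;` and `⁻` are the operations defined from
`P` and `C`, and `1'` is the set `I`. -/
instance termAlgStructure (M : Type) [atomLang.Structure M] :
    algLang.Structure (TermAlg M) where
  funMap := fun {_} f v =>
    match f with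
    | .one => ⟨idSet M, InTA.idset⟩
    | .compl => ⟨(v 0).1ᶜ, InTA.compl (v 0).2⟩
    | .conv => ⟨sConv (v 0).1, InTA.conv (v 0).2⟩
    | .add => ⟨(v 0).1 ∪ (v 1).1, InTA.union (v 0).2 (v 1).2⟩
    | .comp => ⟨sComp (v 0).1 (v 1).1, InTA.comp (v 0).2 (v 1).2⟩
  RelMap := fun {_} r _ => r.elim

/-- `a` goes from `x` to `y` when `P(x,a,a)` and `P(a,y,a)`. -/
def goes {M : Type} [atomLang.Structure M] (a x y : M) : Prop := mP x a a ∧ mP a y a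

/-- `X` splits the pair `(x,y)` when some `a ∈ X` and some `b ∉ X` both go
from `x` to `y`. -/
def SplitsG {M : Type} [atomLang.Structure M] (X : Set M) (x y : M) : Prop :=
  ∃ a ∈ X, ∃ b ∉ X, goes a x y ∧ goes b x y

/-- The pair `(x,y)` is splitable when `x ≠ y` and at least two distinct
elements go from `x` to `y`. -/
def SplitableG {M : Type} [atomLang.Structure M] (x y : M) : Prop :=
  x ≠ y ∧ ∃ a b : M, a ≠ b ∧ goes a x y ∧ goes b x y

/-- Converse of a binary relation, as a set of pairs. -/
def relConv {U : Type} (R : Set (U × U)) : Set (U × U) := {p | (p.2, p.1) ∈ R}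

/-- Composition of binary relations, as sets of pairs. -/
def relComp {U : Type} (R T : Set (U × U)) : Set (U × U) :=
  {p | ∃ w, (p.1, w) ∈ R ∧ (w, p.2) ∈ T}

/-- An atom structure is completely representable. -/
def CompRep (M : Type) [atomLang.Structure M] : Prop :=
  ∃ (U : Type) (rep : M → Set (U × U)),
    (∀ a : M, (rep a).Nonempty) ∧
    (∀ a b : M, a ≠ b → Disjoint (rep a) (rep b)) ∧
    (⋃ a : M, rep a) = Set.univ ∧
    (∀ a : M, (mI a ↔ rep a ⊆ Set.diagonal U) ∧
      ((rep a ⊆ Set.diagonal U) ↔ (rep a ∩ Set.diagonal U).Nonempty)) ∧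
    (∀ a b : M, (mC a b ↔ rep b = relConv (rep a)) ∧
      ((rep b = relConv (rep a)) ↔ (rep b ∩ relConv (rep a)).Nonempty)) ∧
    (∀ a b c : M, (mP a b c ↔ rep c ⊆ relComp (rep a) (rep b)) ∧
      ((rep c ⊆ relComp (rep a) (rep b)) ↔ (rep c ∩ relComp (rep a) (rep b)).Nonempty))
/-- The atoms of the atom structure `Z`: identity atoms `id n i` (`i ≤ n`),
split atoms `r n k` and their converses `rc n k` (`1 ≤ k ≤ n`), and
atoms `w n i m j` (`i ≤ n`, `j ≤ m`).  Distinct constructor applications give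
pairwise distinct elements. -/
inductive Atom : Type
  | id : (n i : ℕ) → i ≤ n → Atom
  | r : (n k : ℕ) → 1 ≤ k → k ≤ n → Atom
  | rc : (n k : ℕ) → 1 ≤ k → k ≤ n → Atom
  | w : (n i m j : ℕ) → i ≤ n → j ≤ m → Atom

/-- The domain function of `Z`. -/
def Atom.dom : Atom → Atom
  | .id n i h => .id n i h
  | .r n _ _ _ => .id n 0 (Nat.zero_le n)
  | .rc n k _ h2 => .id n k h2
  | .w n i _ _ hi _ => .id n i hi

/-- The range function of `Z`. -/
def Atom.rg : Atom → Atom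
  | .id n i h => .id n i h
  | .r n k _ h2 => .id n k h2
  | .rc n _ _ _ => .id n 0 (Nat.zero_le n)
  | .w _ _ m j _ hj => .id m j hj

/-- Membership in the set `I` of identity atoms of `Z`. -/
def Atom.isId : Atom → Prop
  | .id _ _ _ => True
  | _ => False

/-- The converse function on atoms of `Z`. -/
def Atom.cnv : Atom → Atom
  | .id n i h => .id n i h
  | .r n k h1 h2 => .rc n k h1 h2
  | .rc n k h1 h2 => .r n k h1 h2
  | .w n i m j hi hj => .w m j n i hj hi

/-- The binary relation `C` of `Z`: it consists of the pairs `(x,x)` for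
`x ∈ I`, `(r n k, rc n k)`, `(rc n k, r n k)` and `(w n i m j, w m j n i)`,
i.e. exactly the pairs `(a, cnv a)`. -/
def Crel (a b : Atom) : Prop := b = Atom.cnv a

/-- The ternary relation `P` of `Z`: the triples `(dom a, a, a)` and
`(a, rg a, a)` for `a ∈ S`, the triples `(a, b, dom a)` for `(a,b) ∈ C`, and
the triples `(a,b,c)` of non-identity atoms with `dom a = dom c`,
`rg a = dom b`, `rg b = rg c`. -/
def Prel (a b c : Atom) : Prop :=
  (a = b.dom ∧ c = b) ∨
  (b = a.rg ∧ c = a) ∨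
  (Crel a b ∧ c = a.dom) ∨
  (¬ a.isId ∧ ¬ b.isId ∧ ¬ c.isId ∧ a.dom = c.dom ∧ a.rg = b.dom ∧ b.rg = c.rg)

/-- `Z` as a structure for the language `atomLang`. -/
instance atomStructureZ : atomLang.Structure Atom where
  funMap := fun {_} f _ => f.elim
  RelMap := fun {_} r v =>
    match r with
    | AtomRel.I => (v 0).isId
    | AtomRel.C => Crel (v 0) (v 1)
    | AtomRel.P => Prel (v 0) (v 1) (v 2)

/-- `X ⊆ S` splits the pair `(x,y)` if there are `a ∈ X` and `b ∉ X` with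
`dom a = dom b = x` and `rg a = rg b = y`. -/
def Splits (X : Set Atom) (x y : Atom) : Prop :=
  ∃ a ∈ X, ∃ b ∉ X, a.dom = x ∧ a.rg = y ∧ b.dom = x ∧ b.rg = y

/-- The pair `(x,y)` is splitable if `x ≠ y` and there are two distinct
elements `a ≠ b` of `S` with `dom a = dom b = x` and `rg a = rg b = y`. -/
def Splitable (x y : Atom) : Prop :=
  x ≠ y ∧ ∃ a b : Atom, a ≠ b ∧ a.dom = x ∧ a.rg = y ∧ b.dom = x ∧ b.rg = y

/-- In `Z`, for all `X, Y ⊆ S ∖ I` and all distinct `x, y ∈ I`: if `X;Y`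
contains some element `u` with `dom u = x` and `rg u = y`, then `X;Y` contains
every element `v ∈ S` with `dom v = x` and `rg v = y`.  In particular, the
composition of two sets of diversity atoms splits no pair of distinct identity
atoms. -/
theorem stmt_2 (X Y : Set Atom)
    (hX : ∀ a ∈ X, ¬ a.isId) (hY : ∀ a ∈ Y, ¬ a.isId)
    (x y : Atom) (hx : x.isId) (hy : y.isId) (hxy : x ≠ y) :
    ((∃ u ∈ sComp X Y, u.dom = x ∧ u.rg = y) →
      ∀ v : Atom, v.dom = x → v.rg = y → v ∈ sComp X Y) ∧
    ¬ Splits (sComp X Y) x y := by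
  have key : (∃ u ∈ sComp X Y, u.dom = x ∧ u.rg = y) →
      ∀ v : Atom, v.dom = x → v.rg = y → v ∈ sComp X Y := by
    rintro ⟨u, ⟨a, ha, b, hb, hP⟩, hux, huy⟩ v hvx hvy
    have hv : ¬ v.isId := by
      intro h
      cases v <;> simp only [Atom.isId] at h
      exact hxy (hvx.symm.trans hvy)
    have hP' : Prel a b u := hP
    have ha' := hX a ha
    have hb' := hY b hb
    refine ⟨a, ha, b, hb, ?_⟩
    change Prel a b v
    rcases hP' with ⟨h, _⟩ | ⟨h, _⟩ | ⟨_, h⟩ | ⟨_, _, _, h1, h2, h3⟩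
    · exact absurd (by rw [h]; cases b <;> trivial) ha'
    · exact absurd (by rw [h]; cases a <;> trivial) hb'
    · exfalso
      apply hxy
      rw [← hux, ← huy, h]
      cases a <;> rfl
    · exact Or.inr (Or.inr (Or.inr ⟨ha', hb', hv, by rw [h1, hux, hvx], h2, by rw [h3, huy, hvy]⟩))
  refine ⟨key, ?_⟩
  rintro ⟨a, ha, b, hb, h1, h2, h3, h4⟩
  exact hb (key ⟨a, ha, h1, h2⟩ b h3 h4)
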